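/- Let F be a field of characteristic p > 0, let s ≥ 1, let A ∈ F[X], and let A_0,…,A_{s−1} ∈ F[X] with not all A_i equal to zero. Let S = { f ∈ F[X] : degree f < p and A + ∑_{i=0}^{s−1} A_i · derivative^[i] f = 0 }. Then for every f₀ ∈ S, the F-linear span of { f − f₀ : f ∈ S } has dimension at most s − 1; in particular S is contained in a coset of an F-subspace of F[X] of dimension at most s − 1. -/

import Mathlib

/-!
Differences of elements of `S` lie in the space `W` of polynomials `f` of degree `< p` with
`T f = ∑ Aᵢ f⁽ⁱ⁾ = 0`, so it suffices to bound `dim W`. The bound comes from the indicial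
polynomial of `T` at infinity. Put `Bᵢ = X ^ (s - i) * Aᵢ`, let `M` be the largest degree of a
`Bᵢ`, and let `cᵢ` be the coefficient of `X ^ M` in `Bᵢ`. Since
`X ^ s * T f = ∑ Bᵢ * (X ^ i * f⁽ⁱ⁾)`, the coefficient of `X ^ (M + d)` on the left, for `f` of
degree `d`, is the leading coefficient of `f` times `P(d)`, where
`P = ∑ cᵢ Y (Y - 1) ⋯ (Y - i + 1)`. This `P` is nonzero of degree at most `s - 1`, and the integers
`0 ≤ d < p` are distinct in `F`, so elements of `W` have at most `s - 1` possible degrees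
(`exists_degree_set`). A space of polynomials has dimension at most the number of degrees of its
nonzero elements (`rank_le_card_of_natDegree_mem`).
-/

/-- A polynomial in `W` whose coefficients at the indices in `D` vanish is zero, because its leading
coefficient sits at such an index; so reading off these coefficients embeds `W` into `D → F`. -/
theorem rank_le_card_of_natDegree_mem {F : Type*} [Field F] (W : Submodule F (Polynomial F))
    (D : Finset ℕ) (h : ∀ f ∈ W, f ≠ 0 → f.natDegree ∈ D) :
    Module.rank F W ≤ (D.card : ℕ) := by
  let φ : W →ₗ[F] (D → F) :=
    (LinearMap.pi fun d : D => Polynomial.lcoeff F (d : ℕ)) ∘ₗ W.subtype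
  have hφ : Function.Injective φ := by
    rw [injective_iff_map_eq_zero]
    rintro ⟨f, hf⟩ h0
    by_contra hne
    have hf0 : f ≠ 0 := fun h => hne (Subtype.ext h)
    have h1 : f.coeff f.natDegree = 0 := congrFun h0 ⟨f.natDegree, h f hf hf0⟩
    exact hf0 (Polynomial.leadingCoeff_eq_zero.mp h1)
  have h2 := LinearMap.rank_le_of_injective φ hφ
  rwa [rank_fun', Fintype.card_coe] at h2

theorem coeff_X_pow_mul_iterate_derivative {F : Type*} [Field F] (f : Polynomial F) (i : ℕ) :
    (Polynomial.X ^ i * Polynomial.derivative^[i] f).coeff f.natDegree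
      = (f.natDegree.descFactorial i : F) * f.leadingCoeff := by
  rw [Polynomial.coeff_X_pow_mul']
  split_ifs with hi
  · rw [Polynomial.coeff_iterate_derivative, Nat.sub_add_cancel hi, nsmul_eq_mul]
    rfl
  · rw [Nat.descFactorial_of_lt (not_le.mp hi)]
    simp

theorem natDegree_X_pow_mul_iterate_derivative_le {F : Type*} [Field F] (f : Polynomial F)
    (i : ℕ) : (Polynomial.X ^ i * Polynomial.derivative^[i] f).natDegree ≤ f.natDegree := by
  rw [Polynomial.natDegree_le_iff_coeff_eq_zero]
  intro n hn
  rw [Polynomial.coeff_X_pow_mul']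
  split_ifs with hi
  · rw [Polynomial.coeff_iterate_derivative, Nat.sub_add_cancel hi,
      Polynomial.coeff_eq_zero_of_natDegree_lt hn, smul_zero]
  · rfl

/-- The falling factorials are linearly independent, having pairwise distinct degrees. -/
theorem sum_descPochhammer_ne_zero {F : Type*} [Field F] {s : ℕ} (c : Fin s → F)
    (hc : ∃ i, c i ≠ 0) :
    ∑ i : Fin s, c i • descPochhammer F (i : ℕ) ≠ 0 := by
  let S : Polynomial.Sequence F :=
    ⟨fun i => descPochhammer F i, fun i => by
      rw [Polynomial.degree_eq_natDegree (monic_descPochhammer F i).ne_zero,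
        descPochhammer_natDegree]⟩
  have hli : LinearIndependent F (fun i : Fin s => descPochhammer F (i : ℕ)) :=
    S.linearIndependent.comp (fun i : Fin s => (i : ℕ)) Fin.val_injective
  intro h0
  obtain ⟨i, hi⟩ := hc
  exact hi (Fintype.linearIndependent_iff.mp hli c h0 i)

/-- The degrees `< p` of nonzero solutions of a nonzero homogeneous equation of order `< s` lie among
the roots in `{0, …, p - 1}` of the indicial polynomial at infinity, so there are at most
`s - 1` of them. -/
theorem exists_degree_set {F : Type*} [Field F] (p s : ℕ) [CharP F p]
    (Ai : Fin s → Polynomial F) (hAi : ∃ i, Ai i ≠ 0) :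
    ∃ D : Finset ℕ, D.card ≤ s - 1 ∧ ∀ f : Polynomial F, f ≠ 0 → f.degree < (p : WithBot ℕ) →
      ∑ i : Fin s, Ai i * (⇑Polynomial.derivative)^[(i : ℕ)] f = 0 → f.natDegree ∈ D := by
  classical
  let B : Fin s → Polynomial F := fun i => Polynomial.X ^ (s - (i : ℕ)) * Ai i
  let M : ℕ := Finset.univ.sup fun i => (B i).natDegree
  have hM : ∀ i, (B i).natDegree ≤ M := fun i =>
    Finset.le_sup (f := fun i => (B i).natDegree) (Finset.mem_univ i)
  have hc : ∃ i, (B i).coeff M ≠ 0 := by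
    obtain ⟨i₀, hi₀⟩ := hAi
    -- The exponent `s - i₀` is positive, so `M > 0` and `M` is not the junk degree of a zero `Bᵢ`.
    have hpos : 0 < M := by
      refine lt_of_lt_of_le ?_ (hM i₀)
      have h1 : (B i₀).natDegree = (s - (i₀ : ℕ)) + (Ai i₀).natDegree := by
        simp only [B]
        rw [Polynomial.natDegree_mul (pow_ne_zero _ Polynomial.X_ne_zero) hi₀,
          Polynomial.natDegree_X_pow]
      have := i₀.isLt
      omega
    obtain ⟨j, -, hj⟩ := Finset.exists_mem_eq_sup Finset.univ ⟨i₀, Finset.mem_univ _⟩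
      (fun i => (B i).natDegree)
    have hj' : M = (B j).natDegree := hj
    refine ⟨j, fun h => ?_⟩
    rw [hj'] at h
    have hB : B j = 0 := Polynomial.leadingCoeff_eq_zero.mp h
    rw [hj', hB, Polynomial.natDegree_zero] at hpos
    exact lt_irrefl _ hpos
  let P : Polynomial F := ∑ i : Fin s, (B i).coeff M • descPochhammer F (i : ℕ)
  have hP : P ≠ 0 := sum_descPochhammer_ne_zero _ hc
  have hPdeg : P.natDegree ≤ s - 1 := by
    refine Polynomial.natDegree_sum_le_of_forall_le _ _ fun i _ => ?_
    refine (Polynomial.natDegree_smul_le _ _).trans ?_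
    rw [descPochhammer_natDegree]
    have := i.isLt
    omega
  refine ⟨(Finset.range p).filter fun d => P.eval (d : F) = 0, ?_, ?_⟩
  · calc _ ≤ P.roots.toFinset.card := by
          refine Finset.card_le_card_of_injOn (fun d : ℕ => (d : F)) ?_ ?_
          · intro d hd
            have hd' := (Finset.mem_filter.mp hd).2
            simpa [hP] using hd'
          · refine (CharP.natCast_injOn_Iio F p).mono fun d hd => ?_
            exact Finset.mem_range.mp (Finset.mem_filter.mp hd).1
      _ ≤ P.roots.card := Multiset.toFinset_card_le _
      _ ≤ P.natDegree := P.card_roots'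
      _ ≤ s - 1 := hPdeg
  · intro f hf hdeg hT
    rw [Finset.mem_filter, Finset.mem_range]
    refine ⟨(Polynomial.natDegree_lt_iff_degree_lt hf).mpr hdeg, ?_⟩
    have h1 : ∑ i : Fin s, B i * (Polynomial.X ^ (i : ℕ) *
        (⇑Polynomial.derivative)^[(i : ℕ)] f) = 0 := by
      rw [← mul_zero (Polynomial.X ^ s), ← hT, Finset.mul_sum]
      refine Finset.sum_congr rfl fun i _ => ?_
      have hs : (Polynomial.X : Polynomial F) ^ s
          = Polynomial.X ^ (s - (i : ℕ)) * Polynomial.X ^ (i : ℕ) := by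
        rw [← pow_add, Nat.sub_add_cancel i.isLt.le]
      simp only [B]
      rw [hs]
      ring
    have h2 := congrArg (fun g => Polynomial.coeff g (M + f.natDegree)) h1
    simp only [Polynomial.finsetSum_coeff, Polynomial.coeff_zero] at h2
    have h3 : P.eval (f.natDegree : F) * f.leadingCoeff = 0 := by
      rw [← h2, Polynomial.eval_finsetSum, Finset.sum_mul]
      refine Finset.sum_congr rfl fun i _ => ?_
      rw [Polynomial.coeff_mul_add_eq_of_natDegree_le (hM i)
        (natDegree_X_pow_mul_iterate_derivative_le f i),
        coeff_X_pow_mul_iterate_derivative, Polynomial.eval_smul,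
        descPochhammer_eval_eq_descFactorial, smul_eq_mul, mul_assoc]
    exact (mul_eq_zero.mp h3).resolve_right (Polynomial.leadingCoeff_ne_zero.mpr hf)


/-- List-size bound for univariate multiplicity codes: over a field of
characteristic `p > 0`, the set `S` of polynomials `f` of degree `< p` satisfying
the nonzero linear differential equation `A + ∑ᵢ Aᵢ · f⁽ⁱ⁾ = 0` is contained in a
coset of an `F`-subspace of dimension at most `s - 1`: for any `f₀ ∈ S`, the span of
`{f - f₀ : f ∈ S}` has dimension at most `s - 1`. -/
theorem multiplicity_code_list_size (F : Type*) [Field F] (p s : ℕ) [CharP F p]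
    (hp : 0 < p) (hs : 1 ≤ s)
    (A : Polynomial F) (Ai : Fin s → Polynomial F) (hAi : ∃ i, Ai i ≠ 0)
    (S : Set (Polynomial F))
    (hS : S = {f | f.degree < (p : WithBot ℕ) ∧
      A + ∑ i : Fin s, Ai i * (⇑Polynomial.derivative)^[(i : ℕ)] f = 0}) :
    ∀ f₀ ∈ S, Module.rank F (Submodule.span F ((fun f => f - f₀) '' S)) ≤ (s - 1 : ℕ) := by
  intro f₀ hf₀
  obtain ⟨D, hD, hmem⟩ := exists_degree_set p s Ai hAi
  let T : Polynomial F →ₗ[F] Polynomial F :=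
    ∑ i : Fin s, LinearMap.mulLeft F (Ai i) ∘ₗ (Polynomial.derivative ^ (i : ℕ))
  have hT : ∀ f, T f = ∑ i : Fin s, Ai i * (⇑Polynomial.derivative)^[(i : ℕ)] f := by
    intro f
    simp [T, Module.End.pow_apply]
  have hle : Submodule.span F ((fun f => f - f₀) '' S) ≤
      Polynomial.degreeLT F p ⊓ LinearMap.ker T := by
    rw [Submodule.span_le]
    rintro _ ⟨f, hf, rfl⟩
    rw [hS, Set.mem_ofPred_eq, ← hT] at hf hf₀
    refine ⟨Submodule.sub_mem _ (Polynomial.mem_degreeLT.mpr hf.1)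
      (Polynomial.mem_degreeLT.mpr hf₀.1), ?_⟩
    change T (f - f₀) = 0
    rw [map_sub]
    linear_combination hf.2 - hf₀.2
  refine (rank_le_card_of_natDegree_mem _ D fun f hf hf0 => ?_).trans (by exact_mod_cast hD)
  obtain ⟨h1, h2⟩ := hle hf
  exact hmem f hf0 (Polynomial.mem_degreeLT.mp h1) (by rw [← hT]; exact h2)
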